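/- Let f be a monic irreducible polynomial of degree n over a finite field F and let a ∈ G(f) be a nonzero sequence. Then the first n successive states s_0, s_1, …, s_{n−1} are linearly independent over F, where s_i = (a_i, a_{i+1}, …, a_{i+n−1}) ∈ F^n. -/

import Mathlib

open scoped Classical

/-- The left shift operator `L` on the space `V(F) = ℕ → F` of sequences over `F`. -/
def shiftOp (F : Type*) [Semiring F] : Module.End F (ℕ → F) :=
  LinearMap.funLeft F F (fun n => n + 1)

/-!
A nonzero polynomial of degree less than `n` is coprime to `f`, so it cannot kill the nonzero
sequence `a`, which `f` kills; hence `a, L a, …, L^{n-1} a` are linearly independent.  They all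
lie in the kernel of `f(L)`, where a sequence is determined by its first `n` terms because the
recurrence can be solved for its top term.  Truncation to these terms is thus injective on their
span, and it sends `L^i a` to the state `s_i`.
-/

open Polynomial
open scoped nonZeroDivisors

section PowersOfEndomorphism

variable {R M : Type*} [AddCommGroup M]

theorem linearIndependent_pow_apply_of_aeval_apply_ne_zero [CommRing R] [Module R M]
    {T : Module.End R M} {v : M} {n : ℕ}
    (h : ∀ p : R[X], p ≠ 0 → p.degree < n → aeval T p v ≠ 0) :
    LinearIndependent R fun i : Fin n => (T ^ (i : ℕ)) v := by
  let evalAt : degreeLT R n →ₗ[R] M :=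
    LinearMap.applyₗ v ∘ₗ (aeval T).toLinearMap ∘ₗ (degreeLT R n).subtype
  have evalAt_ker : LinearMap.ker evalAt = ⊥ := by
    refine LinearMap.ker_eq_bot'.mpr fun p hp => ?_
    by_contra hne
    exact h p (by simpa using hne) (mem_degreeLT.mp p.2) hp
  simpa [evalAt, Function.comp_def] using
    (degreeLT.basis R n).linearIndependent.map' evalAt evalAt_ker

theorem linearIndependent_pow_apply_of_irreducible [Field R] [Module R M]
    {T : Module.End R M} {f : R[X]} (hf : Irreducible f) {v : M} (hv : v ≠ 0)
    (hfv : aeval T f v = 0) :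
    LinearIndependent R fun i : Fin f.natDegree => (T ^ (i : ℕ)) v := by
  refine linearIndependent_pow_apply_of_aeval_apply_ne_zero fun p hp hdeg hpv => hv ?_
  have coprime : IsCoprime f p := by
    rw [hf.coprime_iff_not_dvd]
    exact not_dvd_of_degree_lt hp (by rwa [degree_eq_natDegree hf.ne_zero])
  exact Submodule.disjoint_def.mp (disjoint_ker_aeval_of_isCoprime T coprime) v hfv hpv

end PowersOfEndomorphism

theorem pow_apply_mem_ker_aeval {R M : Type*} [CommSemiring R] [AddCommMonoid M] [Module R M]
    {T : Module.End R M} {f : R[X]} {v : M} (hv : v ∈ LinearMap.ker (aeval T f)) (i : ℕ) :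
    (T ^ i) v ∈ LinearMap.ker (aeval T f) := by
  have commute : Commute (aeval T f) (T ^ i) := by
    simpa only [map_pow, aeval_X] using (Commute.all f (X ^ i)).map (aeval T)
  rw [LinearMap.mem_ker, ← Module.End.mul_apply, commute.eq, Module.End.mul_apply,
    LinearMap.mem_ker.mp hv, map_zero]

theorem shiftOp_pow_apply {R : Type*} [Semiring R] (i : ℕ) (a : ℕ → R) (k : ℕ) :
    (shiftOp R ^ i) a k = a (i + k) := by
  induction i generalizing k with
  | zero => simp
  | succ i ih =>
    calc (shiftOp R ^ (i + 1)) a k = (shiftOp R ^ i) a (k + 1) := by rw [pow_succ']; rfl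
      _ = a (i + 1 + k) := by rw [ih, add_assoc, add_comm 1 k]

theorem aeval_shiftOp_apply {R : Type*} [CommSemiring R] (p : R[X]) (a : ℕ → R) (k : ℕ) :
    aeval (shiftOp R) p a k = ∑ i ∈ Finset.range (p.natDegree + 1), p.coeff i * a (i + k) := by
  simp [aeval_eq_sum_range, LinearMap.sum_apply, Finset.sum_apply, shiftOp_pow_apply]

theorem eq_zero_of_aeval_shiftOp_eq_zero {R : Type*} [CommSemiring R] {f : R[X]}
    (hf : f.leadingCoeff ∈ R⁰) {a : ℕ → R} (haf : aeval (shiftOp R) f a = 0)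
    (h_init : ∀ k < f.natDegree, a k = 0) : a = 0 := by
  funext k
  induction k using Nat.strong_induction_on with
  | _ k ih =>
    rcases lt_or_ge k f.natDegree with hk | hk
    · exact h_init k hk
    obtain ⟨m, rfl⟩ := Nat.exists_eq_add_of_le hk
    have recurrence := congrFun haf m
    have lower_terms : ∑ i ∈ Finset.range f.natDegree, f.coeff i * a (i + m) = 0 := by
      refine Finset.sum_eq_zero fun i hi => ?_
      rw [ih (i + m) (by grind), Pi.zero_apply, mul_zero]
    rw [aeval_shiftOp_apply, Finset.sum_range_succ, lower_terms, zero_add] at recurrence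
    exact (mul_left_mem_nonZeroDivisors_eq_zero_iff hf).mp recurrence

/-- The initial state `(a_0, …, a_{n-1})` of a sequence `a`, as a linear map. The state `s_i` is
the initial state of the shifted sequence `L^i a`. -/
def initialState (R : Type*) [Semiring R] (n : ℕ) : (ℕ → R) →ₗ[R] (Fin n → R) :=
  LinearMap.funLeft R R Fin.val

theorem initialState_shiftOp_pow {R : Type*} [Semiring R] (n i : ℕ) (a : ℕ → R) :
    initialState R n ((shiftOp R ^ i) a) = fun j : Fin n => a (i + j) :=
  funext fun j => shiftOp_pow_apply i a j

theorem disjoint_ker_aeval_shiftOp_ker_initialState {R : Type*} [CommSemiring R] {f : R[X]}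
    (hf : f.leadingCoeff ∈ R⁰) :
    Disjoint (LinearMap.ker (aeval (shiftOp R) f))
      (LinearMap.ker (initialState R f.natDegree)) :=
  Submodule.disjoint_def.mpr fun _ haf h_init =>
    eq_zero_of_aeval_shiftOp_eq_zero hf haf fun k hk => congrFun h_init ⟨k, hk⟩

theorem stmt5_general {F : Type*} [Field F] {f : F[X]} (hf : Irreducible f) {a : ℕ → F}
    (ha : a ≠ 0) (haf : aeval (shiftOp F) f a = 0) :
    LinearIndependent F fun i j : Fin f.natDegree => a ((i : ℕ) + (j : ℕ)) := by
  have shifts_independent := linearIndependent_pow_apply_of_irreducible hf ha haf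
  have span_shifts_le :
      Submodule.span F (Set.range fun i : Fin f.natDegree => (shiftOp F ^ (i : ℕ)) a) ≤
        LinearMap.ker (aeval (shiftOp F) f) :=
    Submodule.span_le.mpr <| Set.range_subset_iff.mpr fun i => pow_apply_mem_ker_aeval haf i
  have disjoint := disjoint_ker_aeval_shiftOp_ker_initialState
    (mem_nonZeroDivisors_of_ne_zero (leadingCoeff_ne_zero.mpr hf.ne_zero))
  simpa only [Function.comp_def, initialState_shiftOp_pow] using
    shifts_independent.map (disjoint.mono_left span_shifts_le)

/-- Let `f` be a monic irreducible polynomial of degree `n` over a finite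
field `F` and let `a ∈ G(f)` be a nonzero sequence.  Then the first `n` successive states
`sᵢ = (aᵢ, a_{i+1}, …, a_{i+n-1}) ∈ Fⁿ`, `0 ≤ i ≤ n-1`, are linearly independent over `F`. -/
theorem stmt5 (F : Type*) [Field F] [Fintype F] (n : ℕ) (f : Polynomial F)
    (hmonic : f.Monic) (hirr : Irreducible f) (hdeg : f.natDegree = n)
    (a : ℕ → F) (ha : a ≠ 0) (haf : Polynomial.aeval (shiftOp F) f a = 0) :
    LinearIndependent F (fun i : Fin n => fun j : Fin n => a ((i : ℕ) + (j : ℕ))) := by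
  subst hdeg
  exact stmt5_general hirr ha haf
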